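/- Let V be a nonzero finite-dimensional vector space over a finite field F. Inside the group of additive automorphisms of V, let ΓL(V) be the subgroup of all additive automorphisms f for which there exists a field automorphism σ of F with f(c·v) = σ(c)·f(v) for all c ∈ F, v ∈ V; let GL(V) ≤ ΓL(V) be the F-linear such automorphisms and SL(V) ≤ GL(V) those of determinant 1. Let G be a group with SL(V) ≤ G ≤ ΓL(V), and let H be any maximal subgroup of G. Then V is a cyclic F(H ∩ GL(V))-module: there exists v ∈ V such that the F-linear span of { g(v) : g ∈ H ∩ GL(V) } equals V. -/

import Mathlib

/-- The group operation on additive automorphisms is given by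
`g h => AddEquiv.trans h g` (Mathlib's former instance `AddAut.group`, which is
now an `AddGroup` instance). -/
instance AddAut.group (A : Type*) [Add A] : Group (AddAut A) where
  mul g h := AddEquiv.trans h g
  one := AddEquiv.refl _
  inv := AddEquiv.symm
  mul_assoc _ _ _ := rfl
  one_mul _ := rfl
  mul_one _ := rfl
  inv_mul_cancel := AddEquiv.self_trans_symm

theorem aux_norm (F : Type) [Field F] [Fintype F] (σ : F ≃+* F) (a : F) (ha : σ a = a) :
    ∃ μ : F, ∏ i ∈ Finset.range (orderOf σ), (σ ^ i) μ = a := by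
  classical
  have : Finite (F ≃+* F) := Finite.of_injective (fun f => (f : F → F)) DFunLike.coe_injective
  have hfix : ∀ g : Subgroup.zpowers σ, g • a = a := by
    rintro ⟨g, hg⟩
    have : Subgroup.zpowers σ ≤ MulAction.stabilizer (F ≃+* F) a := by
      rw [Subgroup.zpowers_le]; exact ha
    exact this hg
  let K := FixedPoints.subfield (Subgroup.zpowers σ) F
  let a' : K := ⟨a, hfix⟩
  have : IsGalois K F := inferInstance
  obtain ⟨μ, hμ⟩ := FiniteField.norm_surjective K F a'
  refine ⟨μ, ?_⟩
  have h1 : algebraMap K F (Algebra.norm K μ) = a := by rw [hμ]; rfl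
  rw [Algebra.norm_eq_prod_automorphisms] at h1
  rw [← h1, Finset.prod_range]
  refine Fintype.prod_equiv ((finEquivZPowers (isOfFinOrder_of_finite σ)).trans
    (FixedPoints.toAlgAutMulEquiv (Subgroup.zpowers σ) F).toEquiv) _ _ ?_
  intro i
  rfl

theorem aux_cyclic (F : Type) [Field F] [Fintype F] : IsCyclic (F ≃+* F) := by
  have : Finite (F ≃+* F) := Finite.of_injective (fun f => (f : F → F)) DFunLike.coe_injective
  exact isCyclic_of_injective (FixedPoints.toAlgAutMulEquiv (F ≃+* F) F).toMonoidHom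
    (FixedPoints.toAlgAutMulEquiv (F ≃+* F) F).injective

theorem aux_pow_semi {F V : Type} [Field F] [AddCommGroup V] [Module F V]
    (φ : AddAut V) (σ : F ≃+* F) (h : ∀ (c : F) (v : V), φ (c • v) = σ c • φ v) (i : ℕ) :
    ∀ (c : F) (v : V), (φ ^ i) (c • v) = (σ ^ i) c • (φ ^ i) v := by
  induction i with
  | zero => intro c v; rfl
  | succ n ih =>
    intro c v
    rw [pow_succ', pow_succ']
    change φ ((φ ^ n) (c • v)) = σ ((σ ^ n) c) • φ ((φ ^ n) v)
    rw [ih, h]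

theorem aux_scalar {F V : Type} [Field F] [AddCommGroup V] [Module F V] (f : V →ₗ[F] V)
    (h : ∀ v, f v ∈ Submodule.span F {v}) : ∃ a : F, ∀ v, f v = a • v := by
  obtain ⟨a, ha⟩ := LinearMap.exists_eq_smul_id_of_forall_notLinearIndependent (f := f) (by
    intro v hv
    obtain ⟨c, hc⟩ := Submodule.mem_span_singleton.1 (h v)
    rw [LinearIndependent.pair_iff] at hv
    have := hv c (-1) (by rw [hc]; simp)
    simp at this)
  exact ⟨a, fun v => by rw [ha]; rfl⟩

theorem aux_line {F V : Type} [Field F] [Fintype F] [AddCommGroup V] [Module F V]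
    [Nontrivial V] (H : Subgroup (AddAut V))
    (hsemi : ∀ h ∈ H, ∃ σ : F ≃+* F, ∀ (c : F) (v : V), h (c • v) = σ c • h v)
    (hscal : ∀ h ∈ H, (∀ (c : F) (v : V), h (c • v) = c • h v) →
      ∀ v, h v ∈ Submodule.span F {v}) :
    ∃ w : V, w ≠ 0 ∧ ∀ h ∈ H, h w ∈ Submodule.span F {w} := by
  classical
  have := aux_cyclic F
  have : Finite (F ≃+* F) := Finite.of_injective (fun f => (f : F → F)) DFunLike.coe_injective
  let T : Subgroup (F ≃+* F) :=
    { carrier := {σ | ∃ h ∈ H, ∀ (c : F) (v : V), h (c • v) = σ c • h v}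
      one_mem' := ⟨1, H.one_mem, fun c v => rfl⟩
      mul_mem' := by
        rintro σ τ ⟨g, hg, hg'⟩ ⟨h, hh, hh'⟩
        refine ⟨g * h, H.mul_mem hg hh, fun c v => ?_⟩
        change g (h (c • v)) = σ (τ c) • g (h v)
        rw [hh', hg']
      inv_mem' := by
        rintro σ ⟨g, hg, hg'⟩
        refine ⟨g⁻¹, H.inv_mem hg, fun c v => ?_⟩
        change g.symm (c • v) = σ.symm c • g.symm v
        apply g.injective
        rw [hg']; simp }
  obtain ⟨⟨σ, φ, hφ, hσ⟩, hgen⟩ := IsCyclic.exists_generator (α := T)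
  have hgen' : ∀ h ∈ H, ∃ j : ℕ, ∀ (c : F) (v : V), h (c • v) = (σ ^ j) c • h v := by
    intro h hh
    obtain ⟨τ, hτ⟩ := hsemi h hh
    have := hgen ⟨τ, h, hh, hτ⟩
    rw [← mem_powers_iff_mem_zpowers] at this
    obtain ⟨j, hj⟩ := this
    refine ⟨j, ?_⟩
    have h2 : σ ^ j = τ := congrArg Subtype.val hj
    rw [h2]; exact hτ
  have hk : 0 < orderOf σ := orderOf_pos σ
  set k := orderOf σ with hkdef
  -- φ^k is a scalar
  have hlin : ∀ (c : F) (v : V), (φ ^ k) (c • v) = c • (φ ^ k) v := by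
    intro c v
    rw [aux_pow_semi φ σ hσ, hkdef, pow_orderOf_eq_one]; rfl
  obtain ⟨a, ha⟩ := aux_scalar (F := F) (V := V)
    { toFun := fun v => (φ ^ k) v, map_add' := map_add _, map_smul' := hlin }
    (hscal _ (H.pow_mem hφ k) hlin)
  have ha' : ∀ v, (φ ^ k) v = a • v := ha
  obtain ⟨v, hv⟩ := exists_ne (0 : V)
  have hσa : σ a = a := by
    have h1 : φ ((φ ^ k) v) = (φ ^ k) (φ v) := by
      change (φ * φ ^ k) v = (φ ^ k * φ) v
      rw [← pow_succ, ← pow_succ']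
    rw [ha', ha', hσ] at h1
    have h2 : (φ v) ≠ 0 := by simpa using hv
    exact smul_left_injective F h2 h1
  have ha0 : a ≠ 0 := by
    rintro rfl
    have := ha' v
    rw [zero_smul] at this
    exact hv (by simpa using this)
  obtain ⟨μ, hμ⟩ := aux_norm F σ a hσa
  have hμ0 : μ ≠ 0 := by
    rintro rfl
    apply ha0
    rw [← hμ]
    exact Finset.prod_eq_zero (Finset.mem_range.2 hk) (map_zero _)
  let ψ : V →+ V := { toFun := fun v => μ⁻¹ • φ v, map_zero' := by simp, map_add' := by simp }
  have hψ : ∀ v, ψ v = μ⁻¹ • φ v := fun v => rfl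
  have hψi : ∀ (i : ℕ) (v : V), ψ^[i] v =
      (∏ j ∈ Finset.range i, (σ ^ j) μ)⁻¹ • (φ ^ i) v := by
    intro i
    induction i with
    | zero => intro v; simp; rfl
    | succ n ih =>
      intro v
      rw [Function.iterate_succ_apply', ih, hψ, hσ, smul_smul, pow_succ',
        Finset.prod_range_succ']
      congr 1
      rw [mul_inv, mul_comm, map_inv₀, map_prod]
      congr 1
      simp [pow_succ']
  have hψk : ∀ v, ψ^[k] v = v := by
    intro v
    rw [hψi, hμ, ha', smul_smul, inv_mul_cancel₀ ha0, one_smul]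
  have hψs : ∀ (i : ℕ) (c : F) (v : V), ψ^[i] (c • v) = (σ ^ i) c • ψ^[i] v := by
    intro i c v
    rw [hψi, hψi, aux_pow_semi φ σ hσ, smul_smul, smul_smul, mul_comm]
  have hne : ∃ c : F, ∑ i ∈ Finset.range k, ψ^[i] (c • v) ≠ 0 := by
    by_contra! hcon
    obtain ⟨l, hl, -⟩ := Submodule.exists_le_ker_of_notMem (K := F)
      (p := (⊥ : Submodule F V)) (v := v) (by simpa using hv)
    have hli := (linearIndependent_monoidHom F F).comp
      (fun i : Fin k => (((σ ^ (i : ℕ) : F ≃+* F) : F →+* F) : F →* F)) (by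
        intro i j hij
        have : σ ^ (i : ℕ) = σ ^ (j : ℕ) := by
          ext x
          exact DFunLike.congr_fun hij x
        exact Fin.ext (pow_injOn_Iio_orderOf i.2 j.2 this))
    rw [Fintype.linearIndependent_iff] at hli
    have := hli (fun i => l (ψ^[i] v)) (by
      funext c
      have h3 := congrArg l (hcon c)
      rw [map_sum, map_zero, Finset.sum_range] at h3
      rw [Finset.sum_apply]
      simp only [Pi.zero_apply]
      rw [← h3]
      refine Finset.sum_congr rfl fun i _ => ?_
      rw [hψs, map_smul]
      simp [mul_comm]) ⟨0, hk⟩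
    exact hl this
  obtain ⟨c, hc⟩ := hne
  set w := ∑ i ∈ Finset.range k, ψ^[i] (c • v) with hw
  have hψw : ψ w = w := by
    have h1 := Finset.sum_range_succ (fun i => ψ^[i] (c • v)) k
    rw [Finset.sum_range_succ', hψk] at h1
    simp only [Function.iterate_zero, id] at h1
    have h2 := add_right_cancel h1
    have h3 : ψ w = ∑ i ∈ Finset.range k, ψ^[i + 1] (c • v) := by
      rw [hw, map_sum]
      simp only [Function.iterate_succ_apply']
    exact h3.trans h2
  have hφw : φ w = μ • w := by
    conv_rhs => rw [← hψw, hψ, smul_smul, mul_inv_cancel₀ hμ0, one_smul]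
  have hφi : ∀ i : ℕ, (φ ^ i) w ∈ Submodule.span F {w} := by
    intro i
    induction i with
    | zero => exact Submodule.mem_span_singleton_self w
    | succ n ih =>
      obtain ⟨b, hb⟩ := Submodule.mem_span_singleton.1 ih
      rw [pow_succ']
      change φ ((φ ^ n) w) ∈ _
      rw [← hb, hσ, hφw]
      exact Submodule.smul_mem _ _ (Submodule.smul_mem _ _ (Submodule.mem_span_singleton_self w))
  refine ⟨w, hc, fun h hh => ?_⟩
  obtain ⟨j, hj⟩ := hgen' h hh
  have hgn : ∀ u, (φ ^ j) (((φ ^ j)⁻¹ * h) u) = h u := by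
    intro u
    change (φ ^ j * ((φ ^ j)⁻¹ * h)) u = h u
    rw [mul_inv_cancel_left]
  have hnw := hscal ((φ ^ j)⁻¹ * h) (H.mul_mem (H.inv_mem (H.pow_mem hφ j)) hh) (by
    intro c v
    apply (φ ^ j).injective
    rw [hgn, aux_pow_semi φ σ hσ, hgn, hj]) w
  obtain ⟨b, hb⟩ := Submodule.mem_span_singleton.1 hnw
  rw [← hgn w, ← hb, aux_pow_semi φ σ hσ]
  exact Submodule.smul_mem _ _ (hφi j)

theorem aux_SL {F V : Type} [Field F] [AddCommGroup V] [Module F V] [FiniteDimensional F V]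
    (g : V →ₗ[F] V) (hg : LinearMap.det g = 1) : ∃ f : AddAut V, ∀ v, f v = g v :=
  ⟨(LinearMap.equivOfDetNeZero g (by rw [hg]; exact one_ne_zero)).toAddEquiv, fun _ => rfl⟩

theorem aux_det {F V : Type} [Field F] [Fintype F] [AddCommGroup V] [Module F V]
    [FiniteDimensional F V] (f : Module.End F V) (hf : f * f = 0) :
    LinearMap.det (1 + f) = 1 := by
  obtain ⟨p, hp⟩ := CharP.exists F
  have : Fact p.Prime := ⟨CharP.char_is_prime F p⟩
  have h1 : ∀ n : ℕ, (1 + f) ^ n = 1 + (n : F) • f := by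
    intro n
    induction n with
    | zero => simp
    | succ n ih =>
      rw [pow_succ, ih, mul_add, mul_one, add_mul, one_mul, smul_mul_assoc, hf, smul_zero,
        add_zero, Nat.cast_succ, add_smul, one_smul]
      abel
  have h2 : LinearMap.det (1 + f) ^ p = 1 := by
    rw [← map_pow, h1, CharP.cast_eq_zero, zero_smul, add_zero, map_one]
  have h3 : (LinearMap.det (1 + f) - 1) ^ p = 0 := by
    rw [sub_pow_char, h2, one_pow, sub_self]
  exact sub_eq_zero.1 (pow_eq_zero_iff (NeZero.ne p) |>.1 h3)

/-- preimage of a subspace under a semilinear automorphism -/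
theorem aux_pre {F V : Type} [Field F] [AddCommGroup V] [Module F V] (h : AddAut V)
    (hs : ∃ σ : F ≃+* F, ∀ (c : F) (v : V), h (c • v) = σ c • h v) (W : Submodule F V) :
    ∃ W' : Submodule F V, ∀ v, v ∈ W' ↔ h v ∈ W := by
  obtain ⟨σ, hσ⟩ := hs
  refine ⟨{ carrier := {v | h v ∈ W}, add_mem' := ?_, zero_mem' := ?_, smul_mem' := ?_ },
    fun v => Iff.rfl⟩
  · intro a b ha hb
    change h (a + b) ∈ W
    rw [map_add]; exact W.add_mem ha hb
  · change h 0 ∈ W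
    rw [map_zero]; exact W.zero_mem
  · intro c v hv
    change h (c • v) ∈ W
    rw [hσ]; exact W.smul_mem _ hv

theorem aux_inv_apply {V : Type} [AddCommGroup V] (h : AddAut V) (v : V) : h (h⁻¹ v) = v :=
  AddEquiv.apply_symm_apply h v

theorem aux_inv_apply' {V : Type} [AddCommGroup V] (h : AddAut V) (v : V) : h⁻¹ (h v) = v :=
  AddEquiv.symm_apply_apply h v

theorem aux_compl {F V : Type} [Field F] [Fintype F] [AddCommGroup V] [Module F V]
    [FiniteDimensional F V] [Nontrivial V] (H H0 : Subgroup (AddAut V))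
    (hsemi : ∀ h ∈ H, ∃ σ : F ≃+* F, ∀ (c : F) (v : V), h (c • v) = σ c • h v)
    (hnorm : ∀ h ∈ H, ∀ g ∈ H0, h * g * h⁻¹ ∈ H0)
    (hirr : ∀ W : Submodule F V, (∀ h ∈ H, ∀ w ∈ W, h w ∈ W) → W = ⊥ ∨ W = ⊤)
    (M : Submodule F V) (hM : ∀ g ∈ H0, ∀ w ∈ M, g w ∈ M) :
    ∃ U : Submodule F V, (∀ g ∈ H0, ∀ w ∈ U, g w ∈ U) ∧ IsCompl M U := by
  have : Finite V := Module.finite_of_finite F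
  have hsup : ∀ A B : Submodule F V, (∀ g ∈ H0, ∀ w ∈ A, g w ∈ A) →
      (∀ g ∈ H0, ∀ w ∈ B, g w ∈ B) → ∀ g ∈ H0, ∀ w ∈ A ⊔ B, g w ∈ A ⊔ B := by
    intro A B hA hB g hg w hw
    obtain ⟨a, ha, b, hb, rfl⟩ := Submodule.mem_sup.1 hw
    rw [map_add]
    exact Submodule.add_mem_sup (hA g hg a ha) (hB g hg b hb)
  obtain ⟨W, ⟨hWi, hW0⟩, hWmin⟩ := Set.Finite.exists_minimal
    (s := {W : Submodule F V | (∀ g ∈ H0, ∀ w ∈ W, g w ∈ W) ∧ W ≠ ⊥}) (Set.toFinite _)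
    ⟨⊤, fun _ _ _ _ => Submodule.mem_top, top_ne_bot⟩
  let T : Set (Submodule F V) := {Y | ∃ h ∈ H, ∀ v, v ∈ Y ↔ h v ∈ W}
  have hTinv : ∀ Y ∈ T, ∀ g ∈ H0, ∀ w ∈ Y, g w ∈ Y := by
    rintro Y ⟨h, hh, hY⟩ g hg w hw
    rw [hY] at hw ⊢
    have := hWi _ (hnorm h hh g hg) _ hw
    change h (g (h⁻¹ (h w))) ∈ W at this
    rwa [aux_inv_apply'] at this
  have hTmin : ∀ Y ∈ T, ∀ X : Submodule F V, (∀ g ∈ H0, ∀ w ∈ X, g w ∈ X) → X ≤ Y →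
      X = ⊥ ∨ Y ≤ X := by
    rintro Y ⟨h, hh, hY⟩ X hX hXY
    by_cases hX0 : X = ⊥
    · exact Or.inl hX0
    right
    obtain ⟨X', hX'⟩ := aux_pre h⁻¹ (hsemi _ (H.inv_mem hh)) X
    have h1 : W ≤ X' := by
      apply hWmin
      · constructor
        · intro g hg w hw
          rw [hX'] at hw ⊢
          have := hX _ (hnorm _ (H.inv_mem hh) g hg) _ hw
          change h⁻¹ (g (h⁻¹⁻¹ (h⁻¹ w))) ∈ X at this
          rwa [aux_inv_apply'] at this
        · obtain ⟨x, hx, hx0⟩ := Submodule.exists_mem_ne_zero_of_ne_bot hX0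
          intro hb
          have h2 : h x ∈ X' := by rw [hX', aux_inv_apply']; exact hx
          rw [hb, Submodule.mem_bot] at h2
          exact hx0 (by simpa using h2)
      · intro x hx
        rw [hX'] at hx
        have := hXY hx
        rwa [hY, aux_inv_apply] at this
    intro y hy
    rw [hY] at hy
    have := h1 hy
    rwa [hX', aux_inv_apply'] at this
  have hTtop : sSup T = ⊤ := by
    have := hirr (sSup T) (by
      intro f hf
      obtain ⟨S', hS'⟩ := aux_pre f (hsemi f hf) (sSup T)
      have hle : sSup T ≤ S' := by
        apply sSup_le
        rintro Y ⟨h, hh, hY⟩ v hv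
        rw [hS']
        obtain ⟨Z, hZ⟩ := aux_pre f⁻¹ (hsemi _ (H.inv_mem hf)) Y
        have hZT : Z ∈ T := ⟨h * f⁻¹, H.mul_mem hh (H.inv_mem hf), fun v => by
          rw [hZ, hY]; rfl⟩
        apply le_sSup hZT
        rw [hZ, aux_inv_apply']; exact hv
      intro w hw
      exact (hS' w).1 (hle hw))
    refine this.resolve_left fun hb => hW0 ?_
    have : W ≤ sSup T := le_sSup ⟨1, H.one_mem, fun v => Iff.rfl⟩
    rw [hb] at this
    exact le_bot_iff.1 this
  obtain ⟨U, ⟨hUi, hUd⟩, hUmax⟩ := Set.Finite.exists_maximal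
    (s := {U : Submodule F V | (∀ g ∈ H0, ∀ w ∈ U, g w ∈ U) ∧ Disjoint M U}) (Set.toFinite _)
    ⟨⊥, fun g _ w hw => by rw [Submodule.mem_bot] at hw ⊢; rw [hw, map_zero], disjoint_bot_right⟩
  refine ⟨U, hUi, hUd, ?_⟩
  rw [codisjoint_iff, ← top_le_iff, ← hTtop]
  apply sSup_le
  intro Y hY
  rcases hTmin Y hY (Y ⊓ (M ⊔ U)) (fun g hg w hw =>
    ⟨hTinv Y hY g hg w hw.1, hsup M U hM hUi g hg w hw.2⟩) inf_le_left with h | h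
  · have h1 : Disjoint M (U ⊔ Y) :=
      hUd.disjoint_sup_right_of_disjoint_sup_left (by rw [disjoint_iff, inf_comm]; exact h)
    have h2 : U ⊔ Y ≤ U := hUmax ⟨hsup U Y hUi (hTinv Y hY), h1⟩ le_sup_left
    exact (le_sup_right.trans h2).trans le_sup_right
  · exact h.trans inf_le_right

theorem aux_proj {F V : Type} [Field F] [AddCommGroup V] [Module F V] (M U : Submodule F V)
    (h : IsCompl M U) : ∃ P : V →ₗ[F] V, (∀ m ∈ M, P m = m) ∧ (∀ u ∈ U, P u = 0) := by
  refine ⟨M.subtype ∘ₗ M.projectionOnto U h, fun m hm => ?_, fun u hu => ?_⟩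
  · have := Submodule.projectionOnto_apply_left h ⟨m, hm⟩
    simp only [LinearMap.comp_apply]
    rw [this]; rfl
  · simp only [LinearMap.comp_apply]
    rw [Submodule.projectionOnto_apply_of_mem_right h hu]; rfl

theorem aux_proj_comm {F V : Type} [Field F] [AddCommGroup V] [Module F V] (M U : Submodule F V)
    (h : IsCompl M U) (P : V →ₗ[F] V) (hP : ∀ m ∈ M, P m = m) (hP' : ∀ u ∈ U, P u = 0)
    (g : AddAut V) (hM : ∀ w ∈ M, g w ∈ M) (hU : ∀ w ∈ U, g w ∈ U) (x : V) :
    P (g x) = g (P x) := by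
  have hx : x ∈ M ⊔ U := by rw [h.sup_eq_top]; trivial
  obtain ⟨a, ha, b, hb, rfl⟩ := Submodule.mem_sup.1 hx
  rw [map_add, map_add, map_add, hP _ ha, hP' _ hb, hP _ (hM a ha), hP' _ (hU b hb), add_zero,
    add_zero]

/-- If `U` is the complement of two different invariant subspaces `M`, `N`. -/
theorem aux_two_compl {F V : Type} [Field F] [AddCommGroup V] [Module F V]
    (H0 : Subgroup (AddAut V)) (M N U : Submodule F V) (hM : ∀ g ∈ H0, ∀ w ∈ M, g w ∈ M)
    (hN : ∀ g ∈ H0, ∀ w ∈ N, g w ∈ N) (hU : ∀ g ∈ H0, ∀ w ∈ U, g w ∈ U)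
    (hMU : IsCompl M U) (hNU : IsCompl N U) (v u : V) (hv : v ∈ M) (hu : u ∈ U)
    (hvu : v + u ∈ N) :
    ∃ f : Module.End F V, f * f = 0 ∧ f v = u ∧ f u = 0 ∧
      ∀ g ∈ H0, ∀ x, f (g x) = g (f x) := by
  obtain ⟨P, hP, hP'⟩ := aux_proj M U hMU
  obtain ⟨Q, hQ, hQ'⟩ := aux_proj N U hNU
  have hker : ∀ y ∈ U, (Q - P) y = 0 := fun y hy => by
    rw [LinearMap.sub_apply, hP' y hy, hQ' y hy, sub_zero]
  have hr : ∀ (A : Submodule F V) (R : V →ₗ[F] V), IsCompl A U → (∀ m ∈ A, R m = m) →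
      (∀ u ∈ U, R u = 0) → ∀ x, R x - x ∈ U := by
    intro A R hA h1 h2 x
    have hx : x ∈ A ⊔ U := by rw [hA.sup_eq_top]; trivial
    obtain ⟨a, ha, b, hb, rfl⟩ := Submodule.mem_sup.1 hx
    rw [map_add, h1 a ha, h2 b hb, add_zero, sub_add_cancel_left]
    exact U.neg_mem hb
  have hrange : ∀ x, (Q - P) x ∈ U := by
    intro x
    have := U.sub_mem (hr N Q hNU hQ hQ' x) (hr M P hMU hP hP' x)
    rwa [sub_sub_sub_cancel_right] at this
  refine ⟨Q - P, ?_, ?_, hker u hu, ?_⟩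
  · ext x
    exact hker _ (hrange x)
  · rw [LinearMap.sub_apply, hP v hv]
    have := hQ _ hvu
    rw [map_add, hQ' u hu, add_zero] at this
    rw [this, add_sub_cancel_left]
  · intro g hg x
    rw [LinearMap.sub_apply, LinearMap.sub_apply, map_sub,
      aux_proj_comm M U hMU P hP hP' g (hM g hg) (hU g hg),
      aux_proj_comm N U hNU Q hQ hQ' g (hN g hg) (hU g hg)]

theorem aux_trans {F V : Type} [Field F] [AddCommGroup V] [Module F V]
    (u v z y : V) (hu : u ≠ 0) (hv : v ∉ Submodule.span F {u}) (hz : z ≠ 0)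
    (hy : y ∉ Submodule.span F {z}) :
    ∃ s : V ≃ₗ[F] V, LinearMap.det (s : V →ₗ[F] V) = 1 ∧ (∃ a : F, s u = a • z) ∧
      (∃ b : F, y = b • s v) := by
  have hv0 : v ≠ 0 := by rintro rfl; exact hv (Submodule.zero_mem _)
  have hy0 : y ≠ 0 := by rintro rfl; exact hy (Submodule.zero_mem _)
  have h := Projectivization.specialLinearGroup_is_two_pretransitive F V
  rw [MulAction.is_two_pretransitive_iff] at h
  obtain ⟨g, h1, h2⟩ := h (a := Projectivization.mk F v hv0) (b := Projectivization.mk F u hu)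
    (c := Projectivization.mk F y hy0) (d := Projectivization.mk F z hz)
    (by
      intro he
      rw [Projectivization.mk_eq_mk_iff'] at he
      exact hv (Submodule.mem_span_singleton.2 he))
    (by
      intro he
      rw [Projectivization.mk_eq_mk_iff'] at he
      exact hy (Submodule.mem_span_singleton.2 he))
  rw [Projectivization.specialLinearGroup_smul_def, Projectivization.smul_mk] at h1 h2
  have h1' := h1.symm
  rw [Projectivization.mk_eq_mk_iff'] at h1' h2
  refine ⟨g.1, ?_, ?_, ?_⟩
  · have := congrArg Units.val g.2
    rwa [LinearEquiv.coe_det] at this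
  · obtain ⟨a, ha⟩ := h2
    exact ⟨a, ha.symm⟩
  · obtain ⟨b, hb⟩ := h1'
    exact ⟨b, hb.symm⟩

/-- Let `V` be a nonzero finite-dimensional vector space over a finite field `F`.
Inside the group `AddAut V` of additive automorphisms of `V`, let `ΓL` be the
subgroup of semilinear automorphisms (those `f` with `f (c • v) = σ c • f v` for
some field automorphism `σ` of `F`), `GLV ≤ ΓL` the `F`-linear ones, and
`SLV ≤ GLV` those of determinant `1`.  If `SLV ≤ G ≤ ΓL` and `H` is a maximal
subgroup of `G`, then `V` is a cyclic `F(H ∩ GLV)`-module: there is `v : V` whose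
`H ∩ GLV`-orbit spans `V` over `F`. -/
theorem maximal_subgroup_cyclic_module
    (F : Type) [Field F] [Fintype F]
    (V : Type) [AddCommGroup V] [Module F V] [FiniteDimensional F V]
    [Nontrivial V]
    (ΓL : Subgroup (AddAut V))
    (hΓL : ∀ f : AddAut V, f ∈ ΓL ↔
      ∃ σ : F ≃+* F, ∀ (c : F) (v : V), f (c • v) = σ c • f v)
    (GLV : Subgroup (AddAut V))
    (hGLV : ∀ f : AddAut V, f ∈ GLV ↔ ∀ (c : F) (v : V), f (c • v) = c • f v)
    (SLV : Subgroup (AddAut V))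
    (hSLV : ∀ f : AddAut V, f ∈ SLV ↔
      ∃ g : V →ₗ[F] V, LinearMap.det g = 1 ∧ ∀ v : V, g v = f v)
    (G : Subgroup (AddAut V)) (hSG : SLV ≤ G) (hGΓ : G ≤ ΓL)
    (H : Subgroup (AddAut V)) (hHG : H ≤ G) (hH : IsCoatom (H.subgroupOf G)) :
    ∃ v : V, Submodule.span F {w : V | ∃ f ∈ H ⊓ GLV, w = f v} = ⊤ := by
  classical
  have hfinV : Finite V := Module.finite_of_finite F
  have hHsemi : ∀ h ∈ H, ∃ σ : F ≃+* F, ∀ (c : F) (v : V), h (c • v) = σ c • h v :=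
    fun h hh => (hΓL h).1 (hGΓ (hHG hh))
  have hmkSL : ∀ g : V →ₗ[F] V, LinearMap.det g = 1 → ∃ f ∈ SLV, ∀ v, f v = g v := by
    intro g hg
    obtain ⟨f, hf⟩ := aux_SL g hg
    exact ⟨f, (hSLV f).2 ⟨g, hg, fun v => (hf v).symm⟩, hf⟩
  have hSLGL : SLV ≤ GLV := by
    intro f hf
    obtain ⟨g, -, hg⟩ := (hSLV f).1 hf
    rw [hGLV]
    intro c v
    rw [← hg, ← hg, map_smul]
  have hkey : ∀ S : Subgroup (AddAut V), H ≤ S → (∀ f ∈ SLV, f ∈ S → f ∈ H) ∨ SLV ≤ S := by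
    intro S hS
    have h1 : H.subgroupOf G ≤ S.subgroupOf G := fun x hx => hS hx
    rcases hH.le_iff.1 h1 with h | h
    · right
      intro f hf
      have : (⟨f, hSG hf⟩ : G) ∈ S.subgroupOf G := by rw [h]; trivial
      exact this
    · left
      intro f hf hfS
      have : (⟨f, hSG hf⟩ : G) ∈ S.subgroupOf G := hfS
      rw [h] at this
      exact this
  -- transvections
  have htv : ∀ (l : V →ₗ[F] F) (y : V), l y = 0 → ∃ f ∈ SLV, ∀ x, f x = x + l x • y := by
    intro l y hly
    obtain ⟨f, hf, hf'⟩ := hmkSL (LinearMap.transvection l y) (by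
      rw [LinearMap.transvection.det, hly, add_zero])
    exact ⟨f, hf, fun x => by rw [hf', LinearMap.transvection.apply]⟩
  by_cases hirr : ∀ W : Submodule F V, (∀ h ∈ H, ∀ w ∈ W, h w ∈ W) → W = ⊥ ∨ W = ⊤
  swap
  · push Not at hirr
    obtain ⟨W, hWH, hWb, hWt⟩ := hirr
    let S : Subgroup (AddAut V) :=
      { carrier := {f | ∀ w, f w ∈ W ↔ w ∈ W}
        one_mem' := fun w => Iff.rfl
        mul_mem' := fun {a b} ha hb w => (ha (b w)).trans (hb w)
        inv_mem' := fun {a} ha w => by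
          have := ha (a⁻¹ w)
          rw [aux_inv_apply] at this
          exact this.symm }
    have hHS : H ≤ S := fun f hf w => ⟨fun h => by
      have := hWH _ (H.inv_mem hf) _ h
      rwa [aux_inv_apply'] at this, fun h => hWH f hf w h⟩
    obtain ⟨w, hw, hw0⟩ := Submodule.exists_mem_ne_zero_of_ne_bot hWb
    obtain ⟨v, -, hv⟩ := SetLike.exists_of_lt (lt_top_iff_ne_top.2 hWt)
    rcases hkey S hHS with h | h
    swap
    · exfalso
      have hwv : w ∉ Submodule.span F {v} := by
        intro hwv
        obtain ⟨c, rfl⟩ := Submodule.mem_span_singleton.1 hwv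
        have hc : c ≠ 0 := by rintro rfl; simp at hw0
        exact hv ((W.smul_mem_iff hc).1 hw)
      obtain ⟨l, hl, hl'⟩ := Submodule.exists_le_ker_of_notMem hwv
      obtain ⟨f, hf, hf'⟩ := htv l v (hl' (Submodule.mem_span_singleton_self v))
      have h1 := (h hf w).2 hw
      rw [hf'] at h1
      exact hv ((W.smul_mem_iff hl).1 ((W.add_mem_iff_right hw).1 h1))
    · refine ⟨v, ?_⟩
      set M := Submodule.span F {w : V | ∃ f ∈ H ⊓ GLV, w = f v} with hM
      have hvM : v ∈ M := Submodule.subset_span ⟨1, Subgroup.one_mem _, rfl⟩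
      have hmem : ∀ y : V, v ∉ W ⊔ Submodule.span F {y} → y ∈ M := by
        intro y hy
        obtain ⟨l, hl, hl'⟩ := Submodule.exists_le_ker_of_notMem hy
        obtain ⟨f, hf, hf'⟩ := htv l y
          (hl' (Submodule.mem_sup_right (Submodule.mem_span_singleton_self y)))
        have hfS : f ∈ S := by
          have h0 : ∀ x ∈ W, l x = 0 := fun x hx => hl' (Submodule.mem_sup_left hx)
          by_cases hyW : y ∈ W
          · intro x
            rw [hf']
            exact W.add_mem_iff_left (W.smul_mem _ hyW)
          · intro x
            rw [hf']
            constructor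
            · intro hx
              have h3 := h0 _ hx
              rw [map_add, map_smul, hl' (Submodule.mem_sup_right
                (Submodule.mem_span_singleton_self y)), smul_zero, add_zero] at h3
              rwa [h3, zero_smul, add_zero] at hx
            · intro hx
              rwa [h0 x hx, zero_smul, add_zero]
        have hfv : f v ∈ M := Submodule.subset_span ⟨f, ⟨h f hf hfS, hSLGL hf⟩, rfl⟩
        rw [hf'] at hfv
        exact (M.smul_mem_iff hl).1 ((M.add_mem_iff_right hvM).1 hfv)
      have hWM : W ≤ M := by
        intro y hy
        apply hmem
        rwa [sup_eq_left.2 (by rwa [Submodule.span_singleton_le_iff_mem])]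
      rw [← top_le_iff]
      intro y _
      by_cases hy : v ∈ W ⊔ Submodule.span F {y}
      · obtain ⟨a, ha, b, hb, hab⟩ := Submodule.mem_sup.1 hy
        obtain ⟨c, rfl⟩ := Submodule.mem_span_singleton.1 hb
        have hc : c ≠ 0 := by
          rintro rfl
          rw [zero_smul, add_zero] at hab
          exact hv (hab ▸ ha)
        rw [← hab] at hvM
        exact (M.smul_mem_iff hc).1 ((M.add_mem_iff_right (hWM ha)).1 hvM)
      · exact hmem y hy
  -- irreducible case
  set H0 := H ⊓ GLV with hH0
  have hlin : ∀ g ∈ H0, ∀ (c : F) (v : V), g (c • v) = c • g v := fun g hg => (hGLV g).1 hg.2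
  have hnorm : ∀ h ∈ H, ∀ g ∈ H0, h * g * h⁻¹ ∈ H0 := by
    intro h hh g hg
    refine ⟨H.mul_mem (H.mul_mem hh hg.1) (H.inv_mem hh), (hGLV _).2 ?_⟩
    intro c v
    obtain ⟨σ, hσ⟩ := hHsemi h hh
    have h1 : h⁻¹ (c • v) = σ.symm c • h⁻¹ v := by
      apply h.injective
      rw [aux_inv_apply, hσ, aux_inv_apply, RingEquiv.apply_symm_apply]
    change h (g (h⁻¹ (c • v))) = c • h (g (h⁻¹ v))
    rw [h1, hlin g hg, hσ, RingEquiv.apply_symm_apply]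
  let cyc : V → Submodule F V := fun v => Submodule.span F {w : V | ∃ f ∈ H0, w = f v}
  have hself : ∀ v, v ∈ cyc v := fun v => Submodule.subset_span ⟨1, Subgroup.one_mem _, rfl⟩
  have hcyc : ∀ v, ∀ g ∈ H0, ∀ w ∈ cyc v, g w ∈ cyc v := by
    intro v g hg w hw
    induction hw using Submodule.span_induction with
    | mem x hx =>
      obtain ⟨f, hf, rfl⟩ := hx
      exact Submodule.subset_span ⟨g * f, H0.mul_mem hg hf, rfl⟩
    | zero => rw [map_zero]; exact Submodule.zero_mem _
    | add x y _ _ hx hy => rw [map_add]; exact Submodule.add_mem _ hx hy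
    | smul a x _ hx => rw [hlin g hg]; exact Submodule.smul_mem _ _ hx
  obtain ⟨v, hvmax⟩ := Finite.exists_max (fun v => Module.finrank F (cyc v))
  refine ⟨v, ?_⟩
  change cyc v = ⊤
  by_contra hne
  obtain ⟨U, hU, hMU⟩ := aux_compl H H0 hHsemi hnorm hirr (cyc v) (hcyc v)
  have hUb : U ≠ ⊥ := by
    rintro rfl
    exact hne (by simpa using hMU.sup_eq_top)
  obtain ⟨u, hu, hu0⟩ := Submodule.exists_mem_ne_zero_of_ne_bot hUb
  have hsupN : cyc (v + u) ⊔ U = ⊤ := by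
    rw [← top_le_iff, ← hMU.sup_eq_top]
    refine sup_le (Submodule.span_le.2 ?_) le_sup_right
    rintro _ ⟨f, hf, rfl⟩
    have h1 : f v = f (v + u) + -(f u) := by rw [map_add, add_neg_cancel_right]
    rw [h1]
    exact Submodule.add_mem_sup (hcyc _ f hf _ (hself _)) (U.neg_mem (hU f hf u hu))
  have hNU : IsCompl (cyc (v + u)) U := by
    refine ⟨?_, codisjoint_iff.2 hsupN⟩
    rw [disjoint_iff, ← Submodule.finrank_eq_zero (R := F)]
    have h1 := Submodule.finrank_sup_add_finrank_inf_eq (cyc (v + u)) U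
    have h2 := Submodule.finrank_sup_add_finrank_inf_eq (cyc v) U
    rw [hMU.sup_eq_top, hMU.inf_eq_bot, finrank_bot] at h2
    rw [hsupN] at h1
    have h3 := hvmax (v + u)
    omega
  obtain ⟨f, hff, hfv, hfu, hfc⟩ := aux_two_compl H0 (cyc v) (cyc (v + u)) U (hcyc v)
    (hcyc _) hU hMU hNU v u (hself v) hu (hself _)
  obtain ⟨t, htSL, ht⟩ := hmkSL _ (aux_det f hff)
  have ht' : ∀ x, t x = x + f x := ht
  have hvu : v ∉ Submodule.span F {u} := by
    intro hvu
    obtain ⟨a, ha⟩ := Submodule.mem_span_singleton.1 hvu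
    apply hu0
    rw [← hfv, ← ha, map_smul, hfu, smul_zero]
  let J : Subgroup (AddAut V) := Subgroup.centralizer (H0 : Set (AddAut V))
  have htJ : t ∈ J := by
    rw [Subgroup.mem_centralizer_iff]
    intro h hh
    ext x
    change h (t x) = t (h x)
    rw [ht', ht', map_add, hfc h hh]
  have hJ1 : ∀ h ∈ H, ∀ j ∈ J, h * j * h⁻¹ ∈ J := by
    intro h hh j hj
    rw [Subgroup.mem_centralizer_iff] at hj ⊢
    intro g hg
    have h1 := hj _ (hnorm _ (H.inv_mem hh) g hg)
    rw [inv_inv] at h1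
    calc g * (h * j * h⁻¹) = h * ((h⁻¹ * g * h) * j) * h⁻¹ := by group
      _ = h * (j * (h⁻¹ * g * h)) * h⁻¹ := by rw [h1]
      _ = h * j * h⁻¹ * g := by group
  have hHS : H ≤ Subgroup.normalizer (J : Set (AddAut V)) := by
    intro h hh
    rw [Subgroup.mem_normalizer_iff]
    intro j
    refine ⟨hJ1 h hh j, fun hj => ?_⟩
    have h1 := hJ1 _ (H.inv_mem hh) _ hj
    have h2 : h⁻¹ * (h * j * h⁻¹) * h⁻¹⁻¹ = j := by group
    rwa [h2] at h1
  rcases hkey _ hHS with hcase | hcase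
  · have htH : t ∈ H0 := ⟨hcase t htSL (Subgroup.le_normalizer htJ), hSLGL htSL⟩
    have h1 := hcyc v t htH v (hself v)
    rw [ht', hfv] at h1
    have h2 := ((cyc v).add_mem_iff_right (hself v)).1 h1
    exact hu0 (Submodule.disjoint_def.1 hMU.disjoint u h2 hu)
  · have hscal : ∀ h ∈ H, (∀ (c : F) (v : V), h (c • v) = c • h v) →
        ∀ v, h v ∈ Submodule.span F {v} := by
      intro h hh hhl z
      by_contra hz
      have hhH0 : h ∈ H0 := ⟨hh, (hGLV h).2 hhl⟩
      have hz0 : z ≠ 0 := by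
        rintro rfl
        rw [map_zero] at hz
        exact hz (Submodule.zero_mem _)
      obtain ⟨s', hdet, ⟨a, ha⟩, ⟨b, hb⟩⟩ := aux_trans u v z (h z) hu0 hvu hz0 hz
      obtain ⟨s, hs, hss⟩ := hmkSL _ hdet
      have hss' : ∀ x, s x = s' x := hss
      rw [← hss'] at ha hb
      have h1 := (Subgroup.mem_normalizer_iff.1 (hcase hs) t).1 htJ
      rw [Subgroup.mem_centralizer_iff] at h1
      have h2 := DFunLike.congr_fun (h1 h hhH0) (s u)
      change h (s (t (s⁻¹ (s u)))) = s (t (s⁻¹ (h (s u)))) at h2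
      have hsu : h (s u) = (a * b) • s v := by rw [ha, hhl, hb, smul_smul]
      rw [aux_inv_apply', ht' u, hfu, add_zero, hsu] at h2
      have h3 : (a * b) • s v = s ((a * b) • v) := by rw [hss', hss', map_smul]
      rw [h3, aux_inv_apply', ht', LinearMap.map_smul f, hfv] at h2
      have h4 := s.injective h2
      have h5 : (a * b) • u = 0 := by simpa using h4
      have hab : a * b ≠ 0 := by
        intro hab
        rw [hab, zero_smul] at hsu
        apply hu0
        simpa using hsu
      exact hu0 ((smul_eq_zero.1 h5).resolve_left hab)
    obtain ⟨w, hw0, hw⟩ := aux_line H hHsemi hscal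
    have htop := (hirr (Submodule.span F {w}) (by
      intro h hh x hx
      obtain ⟨c, rfl⟩ := Submodule.mem_span_singleton.1 hx
      obtain ⟨σ, hσ⟩ := hHsemi h hh
      rw [hσ]
      exact Submodule.smul_mem _ _ (hw h hh))).resolve_left (by simpa using hw0)
    obtain ⟨a, ha⟩ := Submodule.mem_span_singleton.1
      (show u ∈ Submodule.span F {w} by rw [htop]; trivial)
    obtain ⟨b, hb⟩ := Submodule.mem_span_singleton.1
      (show v ∈ Submodule.span F {w} by rw [htop]; trivial)
    have ha0 : a ≠ 0 := by rintro rfl; exact hu0 (by simpa using ha.symm)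
    apply hvu
    rw [Submodule.mem_span_singleton]
    refine ⟨b * a⁻¹, ?_⟩
    rw [← ha, ← hb, smul_smul, inv_mul_cancel_right₀ ha0]
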